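/- arXiv:0708.3430 — 2 statements merged into one kernel-verified Lean document; each statement's English description precedes it below -/
import Mathlib

section
/- For a function x : Ĩ → ℝ one has Σ_{i,j∈Ĩ} x_i x_j (2δ_{ij} − c_{ij}) = 0 if and only if there exists a real number c such that x_i = c · d_i for all i ∈ Ĩ (i.e. x is a real multiple of the vector of dimensions of the irreducible representations, which records the regular representation of G). -/
open scoped BigOperators
open CategoryTheory Matrix

lemma trace_decomp {V : Type*} [AddCommGroup V] [Module ℂ V] [FiniteDimensional ℂ V]
    (f g : Module.End ℂ V) (n : ℕ) (hn : 0 < n) (hf : f ^ n = 1) (hg : g * f = 1) :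
    ∃ (s : Finset ℂ) (m : ℂ → ℕ), (∀ μ ∈ s, μ ^ n = 1) ∧
      LinearMap.trace ℂ V f = ∑ μ ∈ s, μ * m μ ∧
      LinearMap.trace ℂ V g = ∑ μ ∈ s, (starRingEnd ℂ) μ * m μ ∧
      (Module.finrank ℂ V : ℂ) = ∑ μ ∈ s, (m μ : ℂ) := by
  classical
  have hss : f.IsSemisimple := by
    apply Module.End.isSemisimple_of_squarefree_aeval_eq_zero (p := Polynomial.X ^ n - 1)
    · exact (Polynomial.X_pow_sub_one_separable_iff.mpr (by exact_mod_cast hn.ne')).squarefree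
    · simp [hf]
  have htop : ⨆ μ, f.eigenspace μ = ⊤ := by
    have := Module.End.iSup_maxGenEigenspace_eq_top f
    simpa [hss.isFinitelySemisimple.maxGenEigenspace_eq_eigenspace] using this
  have hint : DirectSum.IsInternal (fun μ => f.eigenspace μ) :=
    (DirectSum.isInternal_submodule_iff_iSupIndep_and_iSup_eq_top _).2
      ⟨f.eigenspaces_iSupIndep, htop⟩
  have hfin : {μ | f.eigenspace μ ≠ ⊥}.Finite :=
    WellFoundedGT.finite_ne_bot_of_iSupIndep f.eigenspaces_iSupIndep
  have key : ∀ (h : Module.End ℂ V) (w : ℂ → ℂ),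
      (∀ μ ∈ hfin.toFinset, ∀ v ∈ f.eigenspace μ, h v = w μ • v) →
      LinearMap.trace ℂ V h = ∑ μ ∈ hfin.toFinset, w μ * (Module.finrank ℂ (f.eigenspace μ) : ℂ) := by
    intro h w hw
    have hw' : ∀ μ, ∀ v ∈ f.eigenspace μ, h v = w μ • v := by
      intro μ v hv
      by_cases hb : f.eigenspace μ = ⊥
      · rw [hb, Submodule.mem_bot] at hv; simp [hv]
      · exact hw μ (by simpa using hb) v hv
    have hm : ∀ μ, Set.MapsTo h (f.eigenspace μ) (f.eigenspace μ) := by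
      intro μ v hv
      rw [hw' μ v hv]
      exact Submodule.smul_mem _ _ hv
    rw [LinearMap.trace_eq_sum_trace_restrict' hint hfin hm]
    refine Finset.sum_congr rfl fun μ _ => ?_
    have : h.restrict (hm μ) = w μ • LinearMap.id := by
      apply LinearMap.ext
      intro v
      apply Subtype.ext
      exact hw' μ v v.2
    rw [this]; simp
  have hpow : ∀ μ ∈ hfin.toFinset, μ ^ n = 1 := by
    intro μ hμ
    have hμ' : f.eigenspace μ ≠ ⊥ := by simpa using hμ
    obtain ⟨v, hv, hv0⟩ := Submodule.exists_mem_ne_zero_of_ne_bot hμ'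
    have h1 : (f ^ n) v = μ ^ n • v := Module.End.HasEigenvector.pow_apply ⟨hv, hv0⟩ n
    rw [hf, Module.End.one_apply] at h1
    have h2 : (μ ^ n - 1) • v = 0 := by rw [sub_smul, ← h1]; simp
    rcases smul_eq_zero.1 h2 with h | h
    · exact sub_eq_zero.1 h
    · exact absurd h hv0
  refine ⟨hfin.toFinset, fun μ => Module.finrank ℂ (f.eigenspace μ), hpow, ?_, ?_, ?_⟩
  · exact key f (fun μ => μ) fun μ _ v hv => Module.End.mem_eigenspace_iff.1 hv
  · refine key g _ fun μ hμ v hv => ?_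
    have h1 := Complex.norm_eq_one_of_pow_eq_one (hpow μ hμ) hn.ne'
    have h0 : (starRingEnd ℂ) μ * μ = 1 := by
      rw [mul_comm, Complex.mul_conj, Complex.normSq_eq_norm_sq, h1]; simp
    have h2 : g (f v) = v := by rw [← Module.End.mul_apply, hg]; rfl
    rw [Module.End.mem_eigenspace_iff.1 hv, map_smul] at h2
    nth_rewrite 2 [← h2]
    rw [smul_smul, h0, one_smul]
  · have := key 1 (fun _ => 1) (by simp)
    simpa using this

lemma fdrep_char_conj {G : Type} [Group G] [Fintype G] (V : FDRep ℂ G) (g : G) :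
    (starRingEnd ℂ) (V.character g) = V.character g⁻¹ := by
  obtain ⟨s, m, -, h1, h2, -⟩ := trace_decomp (V.ρ g) (V.ρ g⁻¹) (Fintype.card G) Fintype.card_pos
    (by rw [← map_pow, pow_card_eq_one, map_one]) (by rw [← map_mul]; simp)
  rw [FDRep.character, FDRep.character, h1, h2]
  simp

lemma sl2_trace {G : Type} [Group G] [Fintype G]
    (φ : G →* Matrix.SpecialLinearGroup (Fin 2) ℂ) (hφ : Function.Injective φ) (g : G) :
    ∃ t : ℝ, Matrix.trace (φ g : Matrix (Fin 2) (Fin 2) ℂ) = t ∧ t ≤ 2 ∧ (t = 2 → g = 1) := by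
  set M : Matrix (Fin 2) (Fin 2) ℂ := (φ g : Matrix (Fin 2) (Fin 2) ℂ) with hM
  set N : Matrix (Fin 2) (Fin 2) ℂ := (φ g⁻¹ : Matrix (Fin 2) (Fin 2) ℂ) with hN
  have hMn : M ^ Fintype.card G = 1 := by
    rw [hM, ← Matrix.SpecialLinearGroup.coe_pow, ← map_pow, pow_card_eq_one]; simp
  have hNM : N * M = 1 := by
    rw [hM, hN, ← Matrix.SpecialLinearGroup.coe_mul, ← map_mul]; simp
  have htr : N.trace = M.trace := by
    rw [hN, map_inv, Matrix.SpecialLinearGroup.coe_inv, Matrix.adjugate_fin_two, Matrix.trace_fin_two,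
      Matrix.trace_fin_two]
    simp [add_comm, hM]
  obtain ⟨s, m, h0, h1, h2, h3⟩ := trace_decomp (Matrix.toLin' M) (Matrix.toLin' N)
    (Fintype.card G) Fintype.card_pos (by rw [← Matrix.toLin'_pow, hMn, Matrix.toLin'_one]; rfl)
    (by rw [Module.End.mul_eq_comp, ← Matrix.toLin'_mul, hNM, Matrix.toLin'_one]; rfl)
  rw [Matrix.trace_toLin'_eq] at h1 h2
  have hreal : (starRingEnd ℂ) M.trace = M.trace := by
    rw [h1, map_sum, ← h1, ← htr, h2]; simp
  obtain ⟨t, ht⟩ := Complex.conj_eq_iff_real.1 hreal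
  have hnorm : ‖M.trace‖ ≤ 2 := by
    have h3' : (2 : ℝ) = ∑ μ ∈ s, (m μ : ℝ) := by
      have : ((2 : ℝ) : ℂ) = ((∑ μ ∈ s, (m μ : ℝ) : ℝ) : ℂ) := by
        push_cast; rw [← h3]; simp
      exact_mod_cast this
    rw [h1, h3']
    refine (norm_sum_le _ _).trans (Finset.sum_le_sum fun μ hμ => ?_)
    rw [norm_mul, Complex.norm_eq_one_of_pow_eq_one (h0 μ hμ) Fintype.card_ne_zero]
    simp
  refine ⟨t, ht, ?_, ?_⟩
  · rw [ht, Complex.norm_real] at hnorm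
    exact (le_abs_self t).trans hnorm
  · intro ht2
    have htr2 : M.trace = 2 := by rw [ht, ht2]; simp
    have hdet : M.det = 1 := (φ g).2
    have hsq : (M - 1) * (M - 1) = 0 := by
      rw [Matrix.trace_fin_two] at htr2
      rw [Matrix.det_fin_two] at hdet
      have e : M 1 1 = 2 - M 0 0 := by linear_combination htr2
      rw [e] at hdet
      ext i j
      fin_cases i <;> fin_cases j <;> simp [Matrix.mul_apply, Fin.sum_univ_two, e] <;>
        first | linear_combination -hdet | ring
    have hpow : ∀ k : ℕ, M ^ k = 1 + (k : ℂ) • (M - 1) := by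
      intro k
      induction k with
      | zero => simp
      | succ k ih =>
        rw [pow_succ, ih]
        have : (1 + (k : ℂ) • (M - 1)) * M = M + (k : ℂ) • (M - 1) + (k : ℂ) • ((M - 1) * (M - 1)) := by
          simp only [add_mul, mul_sub, sub_mul, smul_mul_assoc, one_mul, mul_one, smul_sub]; abel
        rw [this, hsq]
        push_cast
        rw [add_smul]; simp; abel
    have h4 := hpow (Fintype.card G)
    rw [hMn] at h4
    have h5 : ((Fintype.card G : ℕ) : ℂ) • (M - 1) = 0 := by simpa using h4.symm
    rcases smul_eq_zero.1 h5 with h | h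
    · simp at h
    · apply hφ
      rw [map_one]
      apply Subtype.ext
      exact sub_eq_zero.1 h

lemma char_of_split {G : Type} [Group G] (V W K : FDRep ℂ G) (f : W ⟶ V) (p : V ⟶ W)
    (k : K ⟶ V) (q : V ⟶ K) (h1 : f ≫ p = 𝟙 W) (h2 : k ≫ q = 𝟙 K)
    (h3 : p ≫ f + q ≫ k = 𝟙 V) (g : G) :
    V.character g = W.character g + K.character g := by
  have aux : ∀ {W : FDRep ℂ G} (f : W ⟶ V) (p : V ⟶ W), f ≫ p = 𝟙 W →
      W.character g = LinearMap.trace ℂ V (V.ρ g ∘ₗ (f.hom.hom.hom ∘ₗ p.hom.hom.hom)) := by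
    intro W f p h
    have hc : V.ρ g ∘ₗ f.hom.hom.hom = f.hom.hom.hom ∘ₗ W.ρ g := by
      have := congrArg (fun x => x.hom.hom) (f.comm g)
      exact this.symm
    have hp : p.hom.hom.hom ∘ₗ f.hom.hom.hom = LinearMap.id :=
      congrArg (fun x : W ⟶ W => x.hom.hom.hom) h
    rw [← LinearMap.comp_assoc, hc, LinearMap.trace_comp_comm', ← LinearMap.comp_assoc, hp]
    rfl
  rw [aux f p h1, aux k q h2, ← map_add, ← LinearMap.comp_add]
  have : f.hom.hom.hom ∘ₗ p.hom.hom.hom + k.hom.hom.hom ∘ₗ q.hom.hom.hom = LinearMap.id :=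
    congrArg (fun x : V ⟶ V => x.hom.hom.hom) h3
  rw [this]; rfl

lemma hom_zero_of_finrank {G : Type} [Group G] (V W : FDRep ℂ G) (f : W ⟶ V)
    (h : Module.finrank ℂ W = 0) : f = 0 := by
  have hs : Subsingleton W := Module.finrank_zero_iff.1 h
  apply Action.Hom.ext
  apply InducedCategory.hom_ext
  apply ModuleCat.hom_ext
  apply LinearMap.ext
  intro x
  have : x = 0 := hs.elim _ _
  rw [this, map_zero, map_zero]

lemma char_mem_span {G : Type} [Group G] [Fintype G] {ι : Type} [Fintype ι]
    (ρ : ι → FDRep ℂ G)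
    (hcomplete : ∀ V : FDRep ℂ G, Simple V → ∃ i, Nonempty (V ≅ ρ i)) :
    ∀ (n : ℕ) (V : FDRep ℂ G), Module.finrank ℂ V = n →
      V.character ∈ Submodule.span ℂ (Set.range fun i => (ρ i).character) := by
  intro n
  induction n using Nat.strong_induction_on with
  | _ n ih =>
    intro V hV
    by_cases hs : Simple V
    · obtain ⟨i, ⟨e⟩⟩ := hcomplete V hs
      rw [FDRep.char_iso e]
      exact Submodule.subset_span ⟨i, rfl⟩
    by_cases h0 : Module.finrank ℂ V = 0
    · have : V.character = 0 := by
        have hs : Subsingleton V := Module.finrank_zero_iff.1 h0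
        funext g
        have : V.ρ g = 0 := LinearMap.ext fun x => hs.elim _ _
        rw [FDRep.character, this]; simp
      rw [this]; exact Submodule.zero_mem _
    have : ∃ (W : FDRep ℂ G) (f : W ⟶ V), Mono f ∧ f ≠ 0 ∧ ¬ IsIso f := by
      by_contra! hcon
      apply hs
      refine ⟨fun {W} f _ => ⟨fun hi hf0 => ?_, fun hf => hcon W f inferInstance hf⟩⟩
      apply h0
      have h1 : 𝟙 V = 0 := by rw [← IsIso.inv_hom_id f]; exact (congrArg (CategoryTheory.inv f ≫ ·) hf0).trans Limits.comp_zero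
      have h2 : (LinearMap.id : V →ₗ[ℂ] V) = 0 := congrArg (fun x : V ⟶ V => x.hom.hom.hom) h1
      have : Subsingleton V := ⟨fun a b => by
        rw [← LinearMap.id_apply (R := ℂ) a, ← LinearMap.id_apply (R := ℂ) b, h2]; simp⟩
      exact Module.finrank_zero_of_subsingleton
    obtain ⟨W, f, hm, hf0, hni⟩ := this
    let p : V ⟶ W := Injective.factorThru (𝟙 W) f
    have hfp : f ≫ p = 𝟙 W := Injective.comp_factorThru _ _
    let K : FDRep ℂ G := Limits.kernel p
    let k : K ⟶ V := Limits.kernel.ι p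
    let q : V ⟶ K := Limits.kernel.lift p (𝟙 V - p ≫ f) (by simp [hfp])
    have hqk : q ≫ k = 𝟙 V - p ≫ f := Limits.kernel.lift_ι _ _ _
    have hkp : k ≫ p = 0 := Limits.kernel.condition p
    have hkq : k ≫ q = 𝟙 K := by
      rw [← cancel_mono k, Category.assoc, hqk, Preadditive.comp_sub, ← Category.assoc, hkp]
      simp
    have hsum : p ≫ f + q ≫ k = 𝟙 V := by rw [hqk]; abel
    have hchar := char_of_split V W K f p k q hfp hkq hsum
    have hdim : Module.finrank ℂ V = Module.finrank ℂ W + Module.finrank ℂ K := by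
      have := hchar 1
      rw [FDRep.char_one, FDRep.char_one, FDRep.char_one] at this
      exact_mod_cast this
    have hW : Module.finrank ℂ W ≠ 0 := fun h => hf0 (hom_zero_of_finrank V W f h)
    have hK : Module.finrank ℂ K ≠ 0 := fun h => by
      have hk0 : k = 0 := hom_zero_of_finrank V K k h
      rw [hk0, Limits.comp_zero, add_zero] at hsum
      exact hni ⟨p, hfp, hsum⟩
    have e : V.character = W.character + K.character := funext hchar
    rw [e]
    exact Submodule.add_mem _ (ih _ (by omega) W rfl) (ih _ (by omega) K rfl)

lemma reg_char {G : Type} [Group G] [Fintype G] [DecidableEq G] (g : G) :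
    (FDRep.of (Representation.ofMulAction ℂ G G)).character g =
      if g = 1 then (Fintype.card G : ℂ) else 0 := by
  rw [FDRep.character, FDRep.of_ρ']
  change LinearMap.trace ℂ (MonoidAlgebra ℂ G) (Representation.ofMulAction ℂ G G g) = _
  let b : Module.Basis G ℂ (MonoidAlgebra ℂ G) := Module.Basis.ofRepr (MonoidAlgebra.coeffLinearEquiv ℂ)
  have hb : ∀ h, b h = MonoidAlgebra.single h 1 := fun h => rfl
  have hr : ∀ y, b.repr y = y.coeff := fun y => rfl
  rw [LinearMap.trace_eq_matrix_trace ℂ b, Matrix.trace]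
  simp only [Matrix.diag, LinearMap.toMatrix_apply, hb, hr, Representation.ofMulAction_single]
  simp [Finsupp.single_apply]

lemma char_ortho {G : Type} [Group G] [Fintype G] {ι : Type} [DecidableEq ι]
    (ρ : ι → FDRep ℂ G) (hirr : ∀ i, Simple (ρ i))
    (hdist : ∀ i j : ι, i ≠ j → IsEmpty (ρ i ≅ ρ j)) (i j : ι) :
    (Fintype.card G : ℂ)⁻¹ * ∑ g : G, (ρ i).character g * (starRingEnd ℂ) ((ρ j).character g) =
      if i = j then 1 else 0 := by
  have := hirr i
  have := hirr j
  have hinv : Invertible (Nat.card G : ℂ) :=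
    invertibleOfNonzero (by exact_mod_cast Nat.card_pos.ne')
  have h := FDRep.char_orthonormal (ρ i) (ρ j)
  simp only [fdrep_char_conj]
  rw [← Nat.card_eq_fintype_card, h]
  by_cases hij : i = j
  · subst hij
    rw [if_pos ⟨Iso.refl _⟩, if_pos rfl]
  · rw [if_neg (not_nonempty_iff.2 (hdist i j hij)), if_neg hij]

lemma fourier_coeff {G : Type} [Group G] [Fintype G] {ι : Type} [Fintype ι] [DecidableEq ι]
    (ρ : ι → FDRep ℂ G) (hirr : ∀ i, Simple (ρ i))
    (hdist : ∀ i j : ι, i ≠ j → IsEmpty (ρ i ≅ ρ j)) (m : ι → ℂ) (j : ι) :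
    m j = (Fintype.card G : ℂ)⁻¹ *
      ∑ g : G, (∑ i, m i * (ρ i).character g) * (starRingEnd ℂ) ((ρ j).character g) := by
  have : ∑ i, m i * ((Fintype.card G : ℂ)⁻¹ *
      ∑ g : G, (ρ i).character g * (starRingEnd ℂ) ((ρ j).character g)) = m j := by
    simp [char_ortho ρ hirr hdist]
  rw [← this]
  simp only [Finset.mul_sum, Finset.sum_mul]
  rw [Finset.sum_comm]
  refine Finset.sum_congr rfl fun g _ => Finset.sum_congr rfl fun i _ => ?_
  ring

/-- A function supported at the identity has Fourier coefficients proportional to dimensions. -/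
lemma coeff_of_vanish {G : Type} [Group G] [Fintype G] {ι : Type} [Fintype ι] [DecidableEq ι]
    (ρ : ι → FDRep ℂ G) (hirr : ∀ i, Simple (ρ i))
    (hdist : ∀ i j : ι, i ≠ j → IsEmpty (ρ i ≅ ρ j)) (m : ι → ℂ)
    (hv : ∀ g : G, g ≠ 1 → ∑ i, m i * (ρ i).character g = 0) (j : ι) :
    m j = (Fintype.card G : ℂ)⁻¹ * ((∑ i, m i * (ρ i).character 1) * Module.finrank ℂ (ρ j)) := by
  rw [fourier_coeff ρ hirr hdist m j, Finset.sum_eq_single 1]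
  · simp [FDRep.char_one]
  · intro g _ hg
    rw [hv g hg, zero_mul]
  · simp

lemma regular_vanish {G : Type} [Group G] [Fintype G] {ι : Type} [Fintype ι] [DecidableEq ι]
    (ρ : ι → FDRep ℂ G) (hirr : ∀ i, Simple (ρ i))
    (hdist : ∀ i j : ι, i ≠ j → IsEmpty (ρ i ≅ ρ j))
    (hcomplete : ∀ V : FDRep ℂ G, Simple V → ∃ i, Nonempty (V ≅ ρ i)) (g : G) (hg : g ≠ 1) :
    ∑ i, (Module.finrank ℂ (ρ i) : ℂ) * (ρ i).character g = 0 := by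
  classical
  have h := char_mem_span ρ hcomplete _ (FDRep.of (Representation.ofMulAction ℂ G G)) rfl
  obtain ⟨m, hm⟩ := (Submodule.mem_span_range_iff_exists_fun ℂ).1 h
  have hm' : ∀ g : G, ∑ i, m i * (ρ i).character g = if g = 1 then (Fintype.card G : ℂ) else 0 := by
    intro g
    rw [← reg_char g, ← hm]
    simp
  have hd : ∀ j, m j = Module.finrank ℂ (ρ j) := by
    intro j
    rw [coeff_of_vanish ρ hirr hdist m (fun g hg => by rw [hm', if_neg hg]) j, hm', if_pos rfl,
      ← mul_assoc, inv_mul_cancel₀ (by exact_mod_cast Fintype.card_ne_zero), one_mul]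
  have := hm' g
  rw [if_neg hg] at this
  simpa only [hd] using this


/-- In the McKay setting, the quadratic form `Σ_{i,j} x_i x_j (2δ_{ij} − c_{ij})`
vanishes at `x : ι → ℝ` if and only if `x` is a real multiple of the vector of dimensions
`d_i = dim ρ_i` of the irreducible representations of `G`. -/
theorem stmt_4 {G : Type} [Group G] [Fintype G]
    (φ : G →* Matrix.SpecialLinearGroup (Fin 2) ℂ) (hφ : Function.Injective φ)
    {ι : Type} [Fintype ι] [DecidableEq ι]
    (ρ : ι → FDRep ℂ G) (hirr : ∀ i, Simple (ρ i))
    (hdist : ∀ i j : ι, i ≠ j → IsEmpty (ρ i ≅ ρ j))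
    (hcomplete : ∀ V : FDRep ℂ G, Simple V → ∃ i, Nonempty (V ≅ ρ i))
    (c : ι → ι → ℕ)
    (hc : ∀ i j, (c i j : ℂ) = (Fintype.card G : ℂ)⁻¹ *
      ∑ g : G, (ρ i).character g * Matrix.trace (φ g : Matrix (Fin 2) (Fin 2) ℂ) *
        (starRingEnd ℂ) ((ρ j).character g))
    (x : ι → ℝ) :
    (∑ i, ∑ j, x i * x j * (2 * (if i = j then 1 else 0) - (c i j : ℝ))) = 0 ↔
      ∃ r : ℝ, ∀ i, x i = r * (Module.finrank ℂ (ρ i) : ℝ) := by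
  choose t ht ht2 ht1 using sl2_trace φ hφ
  set F : G → ℂ := fun g => ∑ i, (x i : ℂ) * (ρ i).character g with hF
  have hcard : (0 : ℝ) < Fintype.card G := by exact_mod_cast Fintype.card_pos
  have key : (∑ i, ∑ j, x i * x j * (2 * (if i = j then 1 else 0) - (c i j : ℝ))) =
      (Fintype.card G : ℝ)⁻¹ * ∑ g : G, (2 - t g) * Complex.normSq (F g) := by
    apply Complex.ofReal_injective
    have e1 : ∀ i j, ((x i * x j * (2 * (if i = j then 1 else 0) - (c i j : ℝ)) : ℝ) : ℂ) =
        ∑ g : G, (Fintype.card G : ℂ)⁻¹ * ((2 - (t g : ℂ)) * (((x i : ℂ) * (ρ i).character g) *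
          ((x j : ℂ) * (starRingEnd ℂ) ((ρ j).character g)))) := by
      intro i j
      have h := char_ortho ρ hirr hdist i j
      have h2 : (((if i = j then 1 else 0 : ℝ)) : ℂ) = if i = j then 1 else 0 := by
        split_ifs <;> simp
      push_cast [h2]
      rw [hc, ← h]
      simp only [ht, Finset.mul_sum, ← Finset.sum_sub_distrib]
      refine Finset.sum_congr rfl fun g _ => ?_
      ring
    have e2 : ∀ g, ((Complex.normSq (F g) : ℝ) : ℂ) =
        ∑ i, ∑ j, ((x i : ℂ) * (ρ i).character g) *
          ((x j : ℂ) * (starRingEnd ℂ) ((ρ j).character g)) := by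
      intro g
      rw [← Complex.mul_conj, hF]
      simp only [map_sum, map_mul, Complex.conj_ofReal, Finset.sum_mul_sum]
    rw [Complex.ofReal_sum]
    simp only [Complex.ofReal_sum, e1]
    rw [Complex.ofReal_mul, Complex.ofReal_sum]
    simp only [Complex.ofReal_mul, e2, Finset.mul_sum]
    rw [Finset.sum_congr rfl fun i _ => Finset.sum_comm, Finset.sum_comm]
    push_cast
    rfl
  rw [key]
  have step : (Fintype.card G : ℝ)⁻¹ * ∑ g : G, (2 - t g) * Complex.normSq (F g) = 0 ↔
      ∀ g : G, g ≠ 1 → F g = 0 := by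
    rw [mul_eq_zero, or_iff_right (inv_pos.2 hcard).ne', Finset.sum_eq_zero_iff_of_nonneg]
    · constructor
      · intro h g hg
        rcases mul_eq_zero.1 (h g (Finset.mem_univ g)) with h | h
        · exact absurd (ht1 g (by linarith)) hg
        · exact Complex.normSq_eq_zero.1 h
      · intro h g _
        by_cases hg : g = 1
        · have : t g = 2 := by
            have h3 := ht g
            rw [hg, map_one, Matrix.SpecialLinearGroup.coe_one, Matrix.trace_one] at h3
            rw [hg]
            simp only [Fintype.card_fin] at h3
            exact_mod_cast h3.symm
          rw [this]; simp
        · rw [h g hg]; simp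
    · intro g _
      exact mul_nonneg (by linarith [ht2 g]) (Complex.normSq_nonneg _)
  rw [step]
  constructor
  · intro h
    refine ⟨(Fintype.card G : ℝ)⁻¹ * ∑ i, x i * (Module.finrank ℂ (ρ i) : ℝ), fun j => ?_⟩
    have h4 := coeff_of_vanish ρ hirr hdist (fun i => (x i : ℂ)) h j
    simp only [FDRep.char_one] at h4
    apply Complex.ofReal_injective
    rw [h4]
    push_cast
    ring
  · rintro ⟨r, hr⟩ g hg
    have h5 := regular_vanish ρ hirr hdist hcomplete g hg
    have : F g = (r : ℂ) * ∑ i, (Module.finrank ℂ (ρ i) : ℂ) * (ρ i).character g := by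
      rw [hF, Finset.mul_sum]
      refine Finset.sum_congr rfl fun i _ => ?_
      rw [hr i]; push_cast; ring
    rw [this, h5, mul_zero]
end

section
/- Let G be a finite group and H a normal subgroup of G such that the quotient group G/H is cyclic. Then for every irreducible complex representation ρ of G and every irreducible complex representation τ of H, the multiplicity of τ in the restriction of ρ to H is at most 1 (i.e. the restriction of any irreducible complex representation of G to H is multiplicity-free). -/
open scoped BigOperators
open CategoryTheory

lemma isSemisimple_of_pow_eq_one {V : Type*} [AddCommGroup V] [Module ℂ V]
    [FiniteDimensional ℂ V] (T : Module.End ℂ V) (n : ℕ) (hn : n ≠ 0) (h : T ^ n = 1) :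
    T.IsSemisimple := by
  apply Module.End.isSemisimple_of_squarefree_aeval_eq_zero
    (p := (Polynomial.X ^ n - 1 : Polynomial ℂ))
  · exact (Polynomial.X_pow_sub_one_separable_iff.2 (by exact_mod_cast hn)).squarefree
  · simp [h]

lemma eigenvalue_pow_eq_one {V : Type*} [AddCommGroup V] [Module ℂ V]
    (T : Module.End ℂ V) (n : ℕ) (h : T ^ n = 1) (μ : ℂ) (v : V) (hv : v ≠ 0)
    (hμ : T v = μ • v) : μ ^ n = 1 := by
  have key : ∀ k : ℕ, (T ^ k) v = μ ^ k • v := by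
    intro k
    induction k with
    | zero => simp
    | succ k ih => rw [pow_succ', Module.End.mul_apply, ih, map_smul, hμ, smul_smul, pow_succ]
  have := key n
  rw [h, Module.End.one_apply] at this
  have h2 : (μ ^ n - 1) • v = 0 := by rw [sub_smul, ← this]; simp
  rcases smul_eq_zero.1 h2 with h3 | h3
  · exact sub_eq_zero.1 h3
  · exact absurd h3 hv

lemma trace_inv_eq_conj {V : Type*} [AddCommGroup V] [Module ℂ V]
    [FiniteDimensional ℂ V] (T S : Module.End ℂ V) (n : ℕ) (hn : n ≠ 0) (h : T ^ n = 1)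
    (hST : S * T = 1) :
    LinearMap.trace ℂ V S = (starRingEnd ℂ) (LinearMap.trace ℂ V T) := by
  classical
  have hint := DirectSum.isInternal_submodule_of_iSupIndep_of_iSup_eq_top
    T.eigenspaces_iSupIndep (isSemisimple_of_pow_eq_one T n hn h).iSup_eigenspace_eq_top
  have hfin : {μ | T.eigenspace μ ≠ ⊥}.Finite :=
      WellFoundedGT.finite_ne_bot_of_iSupIndep T.eigenspaces_iSupIndep
  have hT : ∀ μ, Set.MapsTo T (T.eigenspace μ) (T.eigenspace μ) := by
    intro μ v hv
    have hv' : T v = μ • v := Module.End.mem_eigenspace_iff.1 hv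
    rw [hv']
    exact Submodule.smul_mem _ _ hv
  have hSv : ∀ μ, ∀ v ∈ T.eigenspace μ, S v = (starRingEnd ℂ μ) • v := by
    intro μ v hv
    by_cases h0 : v = 0
    · simp [h0]
    have hv' : T v = μ • v := Module.End.mem_eigenspace_iff.1 hv
    have hμ := eigenvalue_pow_eq_one T n h μ v h0 hv'
    have hnorm : ‖μ‖ = 1 := Complex.norm_eq_one_of_pow_eq_one hμ hn
    have h1 : (starRingEnd ℂ μ) * μ = 1 := by
      rw [mul_comm, Complex.mul_conj, Complex.normSq_eq_norm_sq, hnorm]; simp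
    have h2 : S (T v) = v := by rw [← Module.End.mul_apply, hST]; rfl
    rw [hv', map_smul] at h2
    conv_rhs => rw [← h2]
    rw [smul_smul, h1, one_smul]
  have hS : ∀ μ, Set.MapsTo S (T.eigenspace μ) (T.eigenspace μ) := by
    intro μ v hv
    rw [hSv μ v hv]
    exact Submodule.smul_mem _ _ hv
  rw [LinearMap.trace_eq_sum_trace_restrict' hint hfin hT,
    LinearMap.trace_eq_sum_trace_restrict' hint hfin hS, map_sum]
  refine Finset.sum_congr rfl fun μ _ => ?_
  have e1 : S.restrict (hS μ) = (starRingEnd ℂ μ) • LinearMap.id := by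
    ext v; exact hSv μ v v.2
  have e2 : T.restrict (hT μ) = μ • LinearMap.id := by
    ext v; exact Module.End.mem_eigenspace_iff.1 v.2
  rw [e1, e2]; simp

lemma isIrreducible_of_simple {G : Type} [Group G] (V : FDRep ℂ G) (hV : Simple V) :
    Representation.IsIrreducible (V.ρ : Representation ℂ G V) := by
  have key : ∀ W : Subrepresentation (V.ρ : Representation ℂ G V), W = ⊥ ∨ W = ⊤ := by
    intro W
    let f : FDRep.of W.toRepresentation ⟶ V :=
      ⟨InducedCategory.homMk (ModuleCat.ofHom W.toSubmodule.subtype), fun g => by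
        ext1; rfl⟩
    have hmono : Mono f := by
      refine ⟨fun {Z} a b hab => ?_⟩
      ext x
      exact congrArg (fun t : Z ⟶ V => t.hom.hom.hom x) hab
    by_cases h0 : f = 0
    · left
      ext v
      constructor
      · intro hv
        have : f.hom.hom.hom ⟨v, hv⟩ = 0 := by rw [h0]; rfl
        exact this
      · intro hv
        have : v = 0 := hv
        rw [this]; exact W.toSubmodule.zero_mem
    · right
      have hiso : IsIso f := (Simple.mono_isIso_iff_nonzero f).2 h0
      ext v
      refine ⟨fun _ => trivial, fun _ => ?_⟩
      have : f.hom.hom.hom ((inv f).hom.hom.hom v) = v := 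
        congrArg (fun t : V ⟶ V => t.hom.hom.hom v) (IsIso.inv_hom_id f)
      rw [← this]
      exact ((inv f).hom.hom.hom v : W.toSubmodule).2
  have hne : (⊥ : Subrepresentation (V.ρ : Representation ℂ G V)) ≠ ⊤ := by
    intro h
    apply id_nonzero V
    ext x
    have : x ∈ (⊤ : Subrepresentation (V.ρ : Representation ℂ G V)) := trivial
    rw [← h] at this
    exact this
  exact { exists_pair_ne := ⟨_, _, hne⟩, eq_bot_or_eq_top := key }

section main
set_option linter.unusedSectionVars false
variable {G : Type} [Group G] [Finite G] (H : Subgroup G) [H.Normal]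
  {V : Type} [AddCommGroup V] [Module ℂ V] [FiniteDimensional ℂ V] (ρ : Representation ℂ G V)
  (g : G)

/-- Operators commuting with the normal subgroup. -/
def commH : Submodule ℂ (Module.End ℂ V) where
  carrier := {a | ∀ h ∈ H, a * ρ h = ρ h * a}
  add_mem' := by
    intro a b ha hb h hh
    rw [add_mul, mul_add, ha h hh, hb h hh]
  zero_mem' := by intro h _; simp
  smul_mem' := by
    intro c a ha h hh
    rw [smul_mul_assoc, ha h hh, mul_smul_comm]

/-- The group of invertible eigenvectors for the conjugation, with their eigenvalues. -/
def eigGroup (n : ℕ) : Subgroup ((Module.End ℂ V)ˣ × rootsOfUnity n ℂ) where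
  carrier := {p | (∀ h ∈ H, (p.1 : Module.End ℂ V) * ρ h = ρ h * p.1) ∧
    ρ g * p.1 = ((p.2 : ℂˣ) : ℂ) • ((p.1 : Module.End ℂ V) * ρ g)}
  mul_mem' := by
    rintro ⟨a, l⟩ ⟨b, m⟩ ⟨ha, ha'⟩ ⟨hb, hb'⟩
    simp only at ha ha' hb hb'
    refine ⟨fun h hh => ?_, ?_⟩
    · simp only [Prod.mk_mul_mk, Units.val_mul]
      rw [mul_assoc, hb h hh, ← mul_assoc, ha h hh, mul_assoc]
    · simp only [Prod.mk_mul_mk, Units.val_mul, Subgroup.coe_mul]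
      rw [← mul_assoc, ha', smul_mul_assoc, mul_assoc, hb', mul_smul_comm, smul_smul, mul_assoc]
  one_mem' := by
    refine ⟨fun h hh => ?_, ?_⟩ <;> simp
  inv_mem' := by
    rintro ⟨a, l⟩ ⟨ha, ha'⟩
    simp only at ha ha'
    refine ⟨fun h hh => ?_, ?_⟩
    · simp only [Prod.inv_mk]
      rw [Units.inv_mul_eq_iff_eq_mul, ← mul_assoc, Units.eq_mul_inv_iff_mul_eq]
      exact (ha h hh).symm
    · simp only [Prod.inv_mk]
      rw [Units.mul_inv_eq_iff_eq_mul, smul_mul_assoc, mul_assoc, ha', mul_smul_comm, smul_smul,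
        Units.inv_mul_cancel_left]
      simp

variable {H ρ g}

lemma exists_factor (hg : ∀ y : G ⧸ H, y ∈ Submonoid.powers (g : G ⧸ H)) (x : G) :
    ∃ k : ℕ, ∃ h ∈ H, x = g ^ k * h := by
  obtain ⟨k, hk⟩ := hg (x : G ⧸ H)
  have hk' : ((g ^ k : G) : G ⧸ H) = (x : G ⧸ H) := by simpa using hk
  exact ⟨k, (g ^ k)⁻¹ * x, QuotientGroup.eq.1 hk', by group⟩

lemma submodule_dichotomy (hg : ∀ y : G ⧸ H, y ∈ Submonoid.powers (g : G ⧸ H))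
    (hρ : ρ.IsIrreducible) (W : Submodule ℂ V) (hW : ∀ h ∈ H, ∀ v ∈ W, ρ h v ∈ W)
    (hW' : ∀ v ∈ W, ρ g v ∈ W) : W = ⊥ ∨ W = ⊤ := by
  have hall : ∀ x : G, ∀ ⦃v⦄, v ∈ W → ρ x v ∈ W := by
    intro x v hv
    obtain ⟨k, h, hh, rfl⟩ := exists_factor hg x
    have hk : ∀ k : ℕ, ∀ v ∈ W, ρ (g ^ k) v ∈ W := by
      intro k
      induction k with
      | zero => simp
      | succ k ih =>
        intro v hv
        rw [pow_succ, map_mul]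
        exact ih _ (hW' v hv)
    rw [map_mul]
    exact hk k _ (hW h hh v hv)
  let S : Subrepresentation ρ := ⟨W, fun x v hv => hall x hv⟩
  rcases hρ.eq_bot_or_eq_top S with h | h
  · left; exact congrArg Subrepresentation.toSubmodule h
  · right; exact congrArg Subrepresentation.toSubmodule h

lemma nontrivial_of_irr (hρ : ρ.IsIrreducible) : Nontrivial V := by
  by_contra hn
  rw [not_nontrivial_iff_subsingleton] at hn
  obtain ⟨A, B, hAB⟩ := hρ.exists_pair_ne
  apply hAB
  ext v
  rw [Subsingleton.elim v 0]
  exact ⟨fun _ => B.toSubmodule.zero_mem, fun _ => A.toSubmodule.zero_mem⟩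

/-- Schur: operators commuting with `H` and `g` are scalars. -/
lemma scalar_of_comm (hg : ∀ y : G ⧸ H, y ∈ Submonoid.powers (g : G ⧸ H))
    (hρ : ρ.IsIrreducible) (a : Module.End ℂ V) (ha : ∀ h ∈ H, a * ρ h = ρ h * a)
    (ha' : ρ g * a = a * ρ g) : ∃ c : ℂ, a = c • 1 := by
  have := nontrivial_of_irr hρ
  obtain ⟨c, hc⟩ := Module.End.exists_eigenvalue a
  refine ⟨c, ?_⟩
  have hd := submodule_dichotomy hg hρ (a.eigenspace c) ?_ ?_
  · rcases hd with h | h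
    · exact absurd h hc
    · ext v
      have hv : v ∈ a.eigenspace c := by rw [h]; trivial
      simpa using Module.End.mem_eigenspace_iff.1 hv
  · intro h hh v hv
    rw [Module.End.mem_eigenspace_iff] at hv ⊢
    rw [← Module.End.mul_apply, ha h hh, Module.End.mul_apply, hv, map_smul]
  · intro v hv
    rw [Module.End.mem_eigenspace_iff] at hv ⊢
    rw [← Module.End.mul_apply, ← ha', Module.End.mul_apply, hv, map_smul]

lemma unit_of_eigen (hg : ∀ y : G ⧸ H, y ∈ Submonoid.powers (g : G ⧸ H))
    (hρ : ρ.IsIrreducible) (a : Module.End ℂ V) (ha : ∀ h ∈ H, a * ρ h = ρ h * a)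
    (l : ℂ) (hl : l ≠ 0) (ha' : ρ g * a = l • (a * ρ g)) (ha0 : a ≠ 0) : IsUnit a := by
  rw [LinearMap.isUnit_iff_ker_eq_bot]
  have hd := submodule_dichotomy hg hρ (LinearMap.ker a) ?_ ?_
  · rcases hd with h | h
    · exact h
    · exact absurd (LinearMap.ker_eq_top.1 h) ha0
  · intro h hh v hv
    rw [LinearMap.mem_ker] at hv ⊢
    rw [← Module.End.mul_apply, ha h hh, Module.End.mul_apply, hv, map_zero]
  · intro v hv
    rw [LinearMap.mem_ker] at hv ⊢
    have := congrArg (fun t : Module.End ℂ V => t v) ha'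
    simp only [Module.End.mul_apply, LinearMap.smul_apply, hv, map_zero] at this
    exact (smul_eq_zero.1 this.symm).resolve_left hl

lemma eigGroup_comm (hg : ∀ y : G ⧸ H, y ∈ Submonoid.powers (g : G ⧸ H))
    (hρ : ρ.IsIrreducible) (n : ℕ) [NeZero n] (p q : eigGroup H ρ g n) : p * q = q * p := by
  refine commutative_of_cyclic_center_quotient
    ((MonoidHom.snd _ _).comp (eigGroup H ρ g n).subtype) ?_ p q
  rintro ⟨⟨a, l⟩, ha, ha'⟩ hk
  have hl : l = 1 := hk
  subst hl
  obtain ⟨c, hc⟩ := scalar_of_comm hg hρ a ha (by simpa using ha')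
  rw [Subgroup.mem_center_iff]
  rintro ⟨⟨b, m⟩, hb⟩
  apply Subtype.ext
  refine Prod.ext (Units.ext ?_) (mul_comm _ _)
  change (b : Module.End ℂ V) * a = a * b
  rw [hc]; simp

lemma commH_comm (hg : ∀ y : G ⧸ H, y ∈ Submonoid.powers (g : G ⧸ H))
    (hρ : ρ.IsIrreducible) (a b : Module.End ℂ V) (ha : a ∈ commH H ρ) (hb : b ∈ commH H ρ) :
    a * b = b * a := by
  set n := Nat.card G with hn
  have hn0 : n ≠ 0 := Nat.card_pos.ne'
  have : NeZero n := ⟨hn0⟩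
  let σ : Module.End ℂ (Module.End ℂ V) := LinearMap.mulLeftRight ℂ (ρ g, ρ g⁻¹)
  have hσ : ∀ x, σ x = ρ g * x * ρ g⁻¹ := fun x => LinearMap.mulLeftRight_apply _ _ _
  have hσk : ∀ k : ℕ, ∀ x, (σ ^ k) x = ρ (g ^ k) * x * ρ (g ^ k)⁻¹ := by
    intro k
    induction k with
    | zero => intro x; simp
    | succ k ih =>
      intro x
      rw [pow_succ', Module.End.mul_apply, ih, hσ, pow_succ', mul_inv_rev, map_mul, map_mul]
      simp only [mul_assoc]
  have hσn : σ ^ n = 1 := by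
    apply LinearMap.ext
    intro x
    rw [hσk, hn, pow_card_eq_one']; simp
  have hginv : ρ g⁻¹ * ρ g = 1 := by rw [← map_mul]; simp
  have hginv' : ρ g * ρ g⁻¹ = 1 := by rw [← map_mul]; simp
  have hinv : ∀ x ∈ commH H ρ, σ x ∈ commH H ρ := by
    intro x hx h hh
    have h1 : g⁻¹ * h * g ∈ H := by
      simpa using (inferInstance : H.Normal).conj_mem h hh g⁻¹
    have h2 := hx _ h1
    rw [map_mul, map_mul] at h2
    rw [hσ]
    calc ρ g * x * ρ g⁻¹ * ρ h = ρ g * (x * (ρ g⁻¹ * ρ h * ρ g)) * ρ g⁻¹ := by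
          simp only [mul_assoc, hginv', mul_one]
      _ = (ρ g * ρ g⁻¹) * ρ h * ρ g * x * ρ g⁻¹ := by rw [h2]; simp only [mul_assoc]
      _ = _ := by rw [hginv', one_mul]; simp only [mul_assoc]
  have htop : ⨆ μ, σ.genEigenspace μ 1 = ⊤ :=
    (isSemisimple_of_pow_eq_one σ n hn0 hσn).iSup_eigenspace_eq_top
  have hdec := Submodule.eq_iSup_inf_genEigenspace 1 hinv htop
  have lift : ∀ μ, ∀ x ∈ commH H ρ ⊓ σ.genEigenspace μ 1, x ≠ 0 →
      ∃ p : eigGroup H ρ g n, ((p : (Module.End ℂ V)ˣ × rootsOfUnity n ℂ).1 : Module.End ℂ V) = x := by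
    rintro μ x ⟨hx, hx'⟩ hx0
    have hx'' : σ x = μ • x := Module.End.mem_eigenspace_iff.1 hx'
    have hμ := eigenvalue_pow_eq_one σ n hσn μ x hx0 hx''
    have hμ0 : μ ≠ 0 := by rintro rfl; simp [hn0] at hμ
    have hgx : ρ g * x = μ • (x * ρ g) := by
      rw [← smul_mul_assoc, ← hx'', hσ, mul_assoc, hginv, mul_one]
    obtain ⟨u, rfl⟩ := unit_of_eigen hg hρ x hx μ hμ0 hgx hx0
    exact ⟨⟨(u, rootsOfUnity.mkOfPowEq μ hμ), hx, by simpa using hgx⟩, rfl⟩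
  rw [hdec] at ha hb
  refine Submodule.iSup_induction _ (motive := fun a => a * b = b * a) ha ?_ (by simp) ?_
  · intro μ x hx
    refine Submodule.iSup_induction _ (motive := fun b => x * b = b * x) hb ?_ (by simp) ?_
    · intro ν y hy
      by_cases hx0 : x = 0
      · simp [hx0]
      by_cases hy0 : y = 0
      · simp [hy0]
      obtain ⟨p, rfl⟩ := lift μ x hx hx0
      obtain ⟨q, rfl⟩ := lift ν y hy hy0
      have := congrArg (fun t : eigGroup H ρ g n =>
        ((t : (Module.End ℂ V)ˣ × rootsOfUnity n ℂ).1 : Module.End ℂ V)) (eigGroup_comm hg hρ n p q)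
      simpa using this
    · intro y z hy hz
      rw [mul_add, add_mul, hy, hz]
  · intro y z hy hz
    rw [mul_add, add_mul, hy, hz]

open Representation in
lemma finrank_intertwining_le_one (hg : ∀ y : G ⧸ H, y ∈ Submonoid.powers (g : G ⧸ H))
    (hρ : ρ.IsIrreducible) {W : Type} [AddCommGroup W] [Module ℂ W] [FiniteDimensional ℂ W]
    (τ : Representation ℂ H W) (hτ : τ.IsIrreducible) :
    Module.finrank ℂ (IntertwiningMap τ (ρ.comp H.subtype)) ≤ 1 := by
  by_cases hz : ∀ f : IntertwiningMap τ (ρ.comp H.subtype), f = 0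
  · exact finrank_le_one 0 fun w => ⟨0, by rw [hz w]; simp⟩
  push Not at hz
  obtain ⟨f, hf⟩ := hz
  have hinj : Function.Injective f := (IsIrreducible.injective_or_eq_zero f).resolve_right hf
  have : NeZero (Nat.card H : ℂ) := ⟨by exact_mod_cast Nat.card_pos.ne'⟩
  obtain ⟨p', hp'⟩ := MonoidAlgebra.exists_leftInverse_of_injective
    (IntertwiningMap.equivLinearMapAsModule τ (ρ.comp H.subtype) f) (LinearMap.ker_eq_bot.2 hinj)
  obtain ⟨p, rfl⟩ := (IntertwiningMap.equivLinearMapAsModule (ρ.comp H.subtype) τ).surjective p'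
  have hp : ∀ w, p (f w) = w := fun w => congrArg (fun t => t w) hp'
  refine finrank_le_one f fun f₂ => ?_
  obtain ⟨c, hc⟩ := (IsIrreducible.algebraMap_intertwiningMap_bijective_of_isAlgClosed
    (ρ := τ)).2 (p.comp f₂)
  refine ⟨c, ?_⟩
  have hc' : ∀ w, p (f₂ w) = c • w := fun w => by
    have := congrArg (fun t : IntertwiningMap τ τ => t w) hc
    simpa using this.symm
  have key : ∀ (e : IntertwiningMap τ (ρ.comp H.subtype)),
      (e.toLinearMap ∘ₗ p.toLinearMap : Module.End ℂ V) ∈ commH H ρ := by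
    intro e h hh
    ext v
    have h1 := p.isIntertwining _ _ ⟨h, hh⟩ v
    have h2 := e.isIntertwining _ _ ⟨h, hh⟩ (p v)
    change e (p (ρ h v)) = ρ h (e (p v))
    exact (congrArg e h1).trans h2
  have hcomm := commH_comm hg hρ _ _ (key f) (key f₂)
  apply IntertwiningMap.ext
  ext w
  have h3 : f (p (f₂ (p (f w)))) = f₂ (p (f (p (f w)))) :=
    congrArg (fun t : Module.End ℂ V => t (f w)) hcomm
  simp only [hp, hc'] at h3
  rw [← IntertwiningMap.coe_toLinearMap, ← IntertwiningMap.coe_toLinearMap, map_smul] at h3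
  exact h3
end main

theorem stmt_6 {G : Type} [Group G] [Fintype G]
    (H : Subgroup G) [Fintype H] (hH : H.Normal) (hcyc : IsCyclic (G ⧸ H))
    (ρ : FDRep ℂ G) (hρ : Simple ρ)
    (τ : FDRep ℂ H) (hτ : Simple τ) :
    ∃ n : ℕ, n ≤ 1 ∧
      (Nat.card H : ℂ)⁻¹ * ∑ h : H, ρ.character (h : G) * (starRingEnd ℂ) (τ.character h)
        = (n : ℂ) := by
  obtain ⟨g', hg'⟩ := IsCyclic.exists_monoid_generator (α := G ⧸ H)
  obtain ⟨g, rfl⟩ := QuotientGroup.mk_surjective g'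
  have hcard : (Nat.card H : ℂ) ≠ 0 := by exact_mod_cast Nat.card_pos.ne'
  let _ : Invertible (Nat.card H : ℂ) := invertibleOfNonzero hcard
  let R : Representation ℂ G ρ := ρ.ρ
  let T : Representation ℂ H τ := τ.ρ
  refine ⟨_, finrank_intertwining_le_one hg' (isIrreducible_of_simple ρ hρ) T (isIrreducible_of_simple τ hτ), ?_⟩
  rw [← Representation.card_inv_mul_sum_char_mul_char_eq_finrank]
  congr 1
  refine Finset.sum_congr rfl fun h _ => ?_
  congr 1
  refine (trace_inv_eq_conj (τ.ρ h) (τ.ρ h⁻¹) (Nat.card H) Nat.card_pos.ne' ?_ ?_).symm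
  · rw [← map_pow, pow_card_eq_one', map_one]
  · rw [← map_mul]; simp
end
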